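/- arXiv:2312.11390 — 2 statements merged into one kernel-verified Lean document; each statement's English description precedes it below -/
import Mathlib

section
/- Let B=(V,A,τ) be a temporal graph, r∈V, and D its underlying multidigraph (vertex set V, one arc per temporal arc with the same tail and head). Then B is a temporal out-branching (TOB) with root r if and only if: distinct temporal arcs of B have distinct (tail,head) pairs (i.e. D is a digraph), D is an out-branching with root r, and for every v∈V\{r} the unique (r,v)-walk in D is a temporal walk in B and is the unique temporal (r,v)-walk in B. -/
open scoped Classical

universe u

/-- A temporal arc `(u, v, s, t)`: tail `u`, head `v`, starting time `s`, arrival time `t`. -/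
abbrev TArc (α : Type u) := α × α × ℕ × ℕ

/-- The tail vertex of a temporal arc. -/
def TArc.tail {α : Type u} (a : TArc α) : α := a.1

/-- The head vertex of a temporal arc. -/
def TArc.head {α : Type u} (a : TArc α) : α := a.2.1

/-- The starting time of a temporal arc. -/
def TArc.ts {α : Type u} (a : TArc α) : ℕ := a.2.2.1

/-- The arrival time of a temporal arc. -/
def TArc.ta {α : Type u} (a : TArc α) : ℕ := a.2.2.2

/-- The elapsed time of a temporal arc. -/
def TArc.el {α : Type u} (a : TArc α) : ℕ := TArc.ta a - TArc.ts a

/-- A temporal graph `(V, A, τ)`. -/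
structure TempGraph (α : Type u) where
  V : Finset α
  A : Finset (TArc α)
  τ : ℕ
  nonempty : V.Nonempty
  valid : ∀ a ∈ A, TArc.tail a ∈ V ∧ TArc.head a ∈ V ∧ TArc.tail a ≠ TArc.head a ∧
      1 ≤ TArc.ts a ∧ TArc.ts a ≤ TArc.ta a ∧ TArc.ta a ≤ τ

variable {α : Type u}

/-- `IsWalk S u v L` : `L` is the list of arcs of a temporal `(u,v)`-walk using arcs from `S`
(the trivial walk, `L = []`, requires `u = v`). -/
def IsWalk (S : Finset (TArc α)) : α → α → List (TArc α) → Prop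
  | u, v, [] => u = v
  | u, v, a :: L => a ∈ S ∧ TArc.tail a = u ∧ (∀ b ∈ L.head?, TArc.ta a ≤ TArc.ts b) ∧
      IsWalk S (TArc.head a) v L

/-- The starting time of a walk (`0` for the trivial walk). -/
def tsW (L : List (TArc α)) : ℕ := (L.map TArc.ts).headI

/-- The arrival time of a walk (`0` for the trivial walk). -/
def taW (L : List (TArc α)) : ℕ := (L.map TArc.ta).getLastD 0

/-- The duration of a walk. -/
def durW (L : List (TArc α)) : ℕ := taW L - tsW L

/-- The travelling time of a walk. -/
def ttW (L : List (TArc α)) : ℕ := (L.map TArc.el).sum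

/-- The waiting time of a walk. -/
def waitW (L : List (TArc α)) : ℕ :=
  (List.zipWith (fun a b => TArc.ts b - TArc.ta a) L L.tail).sum

/-- The final vertex of a walk starting at `u` with arc list `L`. -/
def endv (u : α) (L : List (TArc α)) : α := (L.map TArc.head).getLastD u

/-- The sequence of vertices of a walk starting at `u` with arc list `L`. -/
def verts (u : α) (L : List (TArc α)) : List α := u :: L.map TArc.head

/-- A walk is a (temporal) path when its vertices are pairwise distinct. -/
def IsPathList (u : α) (L : List (TArc α)) : Prop := (verts u L).Nodup

/-- The six optimisation criteria: earliest arrival, fastest time, latest departure,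
minimum transfers, minimum waiting time, shortest travelling time. -/
inductive DistKind : Type
  | EA | FT | LD | MT | MW | ST
  deriving DecidableEq

/-- The value of a walk for each criterion. -/
def wval : DistKind → List (TArc α) → ℕ
  | .EA, L => taW L
  | .FT, L => durW L
  | .LD, L => tsW L
  | .MT, L => L.length
  | .MW, L => waitW L
  | .ST, L => ttW L

/-- `Realizes d S u v L` : `L` is a temporal `(u,v)`-walk within `S` attaining the optimum
(minimum, or maximum for `LD`) of the criterion `d` among all temporal `(u,v)`-walks in `S`. -/
def Realizes (d : DistKind) (S : Finset (TArc α)) (u v : α) (L : List (TArc α)) : Prop :=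
  IsWalk S u v L ∧ ∀ L', IsWalk S u v L' →
    if d = DistKind.LD then wval d L' ≤ wval d L else wval d L ≤ wval d L'

/-- The distance value `d_G(u,v) ∈ ℕ∞` (`+∞` when `v` is not temporally reachable from `u`;
`LD_G(u,u) = τ + 1`). -/
noncomputable def distVal (d : DistKind) (G : TempGraph α) (u v : α) : ℕ∞ :=
  if d = DistKind.LD then
    (if u = v then ((G.τ : ℕ∞) + 1)
     else if ∃ L, IsWalk G.A u v L then
       sSup {n : ℕ∞ | ∃ L, IsWalk G.A u v L ∧ n = (tsW L : ℕ∞)}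
     else ⊤)
  else sInf {n : ℕ∞ | ∃ L, IsWalk G.A u v L ∧ n = (wval d L : ℕ∞)}

/-- Every vertex of `Vs` is temporally reachable from `r` using arcs from `S`. -/
def ReachAll (S : Finset (TArc α)) (Vs : Finset α) (r : α) : Prop :=
  ∀ v ∈ Vs, ∃ L, IsWalk S r v L

/-- `B` is a temporal out-branching (TOB) with root `r`: its arc set is a minimal set of
temporal arcs such that every vertex of `B` is temporally reachable from `r`. -/
def IsTOB (B : TempGraph α) (r : α) : Prop :=
  r ∈ B.V ∧ ReachAll B.A B.V r ∧ ∀ S ⊂ B.A, ¬ ReachAll S B.V r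

/-- `B` is a temporal subgraph of `G`. -/
def IsSubgraph (B G : TempGraph α) : Prop :=
  B.V ⊆ G.V ∧ B.A ⊆ G.A ∧ B.τ ≤ G.τ

/-- `B` is a `d`-TOB of `G` rooted at `r`. -/
def IsDTOB (d : DistKind) (G B : TempGraph α) (r : α) : Prop :=
  IsTOB B r ∧ IsSubgraph B G ∧ ∀ v ∈ B.V, distVal d B r v = distVal d G r v

/-- `B` is a spanning `d`-TOB of `G` rooted at `r`. -/
def IsSpanningDTOB (d : DistKind) (G B : TempGraph α) (r : α) : Prop :=
  IsDTOB d G B r ∧ B.V = G.V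

/-- `B` is a maximum `d`-TOB of `G` rooted at `r`. -/
def IsMaxDTOB (d : DistKind) (G B : TempGraph α) (r : α) : Prop :=
  IsDTOB d G B r ∧ ∀ B', IsDTOB d G B' r → B'.V.card ≤ B.V.card

/-- The in-degree of `v` with respect to the arc set `S`. -/
noncomputable def inDeg (S : Finset (TArc α)) (v : α) : ℕ :=
  (S.filter fun a => TArc.head a = v).card

/-- A walk in a (static) digraph with arc set `E`. -/
def IsDWalk (E : Finset (α × α)) : α → α → List (α × α) → Prop
  | u, v, [] => u = v
  | u, v, e :: L => e ∈ E ∧ e.1 = u ∧ IsDWalk E e.2 v L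

/-- The digraph `(Vs, E)` is an out-branching with root `r`: every `v ∈ Vs` is the end of
a unique `(r,v)`-walk. -/
def IsOutBranching (Vs : Finset α) (E : Finset (α × α)) (r : α) : Prop :=
  ∀ v ∈ Vs, ∃! L, IsDWalk E r v L

/-- The arc of the underlying multidigraph corresponding to a temporal arc. -/
def proj (a : TArc α) : α × α := (TArc.tail a, TArc.head a)

/-- The temporal subgraph of `G` induced by a set of vertices `Z`. -/
noncomputable def induced (G : TempGraph α) (Z : Finset α) (hne : Z.Nonempty) (hZ : Z ⊆ G.V) :
    TempGraph α where
  V := Z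
  A := G.A.filter fun a => TArc.tail a ∈ Z ∧ TArc.head a ∈ Z
  τ := G.τ
  nonempty := hne
  valid := by
    intro a ha
    simp only [Finset.mem_filter] at ha
    obtain ⟨haA, h1, h2⟩ := ha
    obtain ⟨-, -, h3, h4, h5, h6⟩ := G.valid a haA
    exact ⟨h1, h2, h3, h4, h5, h6⟩

/-- The reverse of a temporal arc with respect to lifetime `τ`. -/
def TArc.rev (τ : ℕ) (a : TArc α) : TArc α :=
  (TArc.head a, TArc.tail a, τ + 1 - TArc.ta a, τ + 1 - TArc.ts a)

/-- The reverse of a temporal graph. -/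
noncomputable def TempGraph.rev (G : TempGraph α) : TempGraph α where
  V := G.V
  A := G.A.image (TArc.rev G.τ)
  τ := G.τ
  nonempty := G.nonempty
  valid := by
    intro b hb
    simp only [Finset.mem_image] at hb
    obtain ⟨a, ha, rfl⟩ := hb
    obtain ⟨h1, h2, h3, h4, h5, h6⟩ := G.valid a ha
    refine ⟨h2, h1, Ne.symm h3, ?_, ?_, ?_⟩ <;>
      simp only [TArc.rev, TArc.tail, TArc.head, TArc.ts, TArc.ta] at * <;> omega

/-- The reverse of a temporal walk. -/
def revWalk (τ : ℕ) (L : List (TArc α)) : List (TArc α) := (L.map (TArc.rev τ)).reverse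

/-- Every vertex of `Vs` temporally reaches `r` using arcs from `S`. -/
def CoReachAll (S : Finset (TArc α)) (Vs : Finset α) (r : α) : Prop :=
  ∀ v ∈ Vs, ∃ L, IsWalk S v r L

/-- `B` is a temporal in-branching (TIB) with root `r`. -/
def IsTIB (B : TempGraph α) (r : α) : Prop :=
  r ∈ B.V ∧ CoReachAll B.A B.V r ∧ ∀ S ⊂ B.A, ¬ CoReachAll S B.V r

/-- `B` is a `d`-TIB of `G` rooted at `r`. -/
def IsDTIB (d : DistKind) (G B : TempGraph α) (r : α) : Prop :=
  IsTIB B r ∧ IsSubgraph B G ∧ ∀ v ∈ B.V, distVal d B v r = distVal d G v r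

/-- `B` is a maximum `d`-TIB of `G` rooted at `r`. -/
def IsMaxDTIB (d : DistKind) (G B : TempGraph α) (r : α) : Prop :=
  IsDTIB d G B r ∧ ∀ B', IsDTIB d G B' r → B'.V.card ≤ B.V.card

/-- The reverse of a temporal subgraph, with respect to the ambient lifetime `τ`. -/
noncomputable def revSub (τ : ℕ) (B : TempGraph α) (h : B.τ ≤ τ) : TempGraph α where
  V := B.V
  A := B.A.image (TArc.rev τ)
  τ := τ
  nonempty := B.nonempty
  valid := by
    intro b hb
    simp only [Finset.mem_image] at hb
    obtain ⟨a, ha, rfl⟩ := hb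
    obtain ⟨h1, h2, h3, h4, h5, h6⟩ := B.valid a ha
    refine ⟨h2, h1, Ne.symm h3, ?_, ?_, ?_⟩ <;>
      simp only [TArc.rev, TArc.tail, TArc.head, TArc.ts, TArc.ta] at * <;> omega

/-- `L` (a walk from `u`) is `d`-prefix-optimal: every prefix of it realizes the distance `d`
from `u` to the end vertex of the prefix. -/
def PrefixOptimal (d : DistKind) (S : Finset (TArc α)) (u : α) (L : List (TArc α)) : Prop :=
  ∀ h ≤ L.length, Realizes d S u (endv u (L.take h)) (L.take h)

/-- `EAd_G(u,v)`: the minimum arrival time among the walks realizing `d_G(u,v)`. -/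
noncomputable def eaVal (d : DistKind) (G : TempGraph α) (u v : α) : ℕ∞ :=
  sInf {n : ℕ∞ | ∃ L, Realizes d G.A u v L ∧ n = (taW L : ℕ∞)}

/-- `G'` is a `d`-temporal out-spanning subgraph (d-TOSS) with root `r` of `G`. -/
def IsDTOSS (d : DistKind) (G G' : TempGraph α) (r : α) : Prop :=
  IsSubgraph G' G ∧ G'.V = G.V ∧
    ∀ v ∈ G.V, ∃ L, IsWalk G'.A r v L ∧ Realizes d G.A r v L

/-- Satisfiability of a CNF formula given by the positive/negative occurrence sets
of its clauses. -/
def Satisfiable (n m : ℕ) (pos neg : Fin m → Finset (Fin n)) : Prop :=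
  ∃ σ : Fin n → Bool, ∀ j : Fin m, (∃ i ∈ pos j, σ i = true) ∨ ∃ i ∈ neg j, σ i = false

/-!
An arc `a` can be deleted from an arc set without losing any vertex reachable from `r` unless it is
both usable (its tail is reached in time without `a`) and strictly needed (without `a`, its head is
not reached by time `ta a`): otherwise every walk through `a` can be rerouted with no later arrival.
So in a TOB every arc is usable and strictly needed. As the trivial walk arrives at time `0`, no arc
enters the root; and of two arcs with the same head, the one arriving no earlier is not strictly
needed. Hence a walk from the root is forced, read backwards from its end, even in the underlying
digraph. Conversely, in an out-branching each arc lies on the unique walk to its head, so none can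
be deleted.
-/

section Walks

variable {S T : Finset (TArc α)} {u v u' v' : α} {a : TArc α} {L L' : List (TArc α)}

@[simp]
lemma taW_concat (L : List (TArc α)) (a : TArc α) : taW (L ++ [a]) = TArc.ta a := by
  simp [taW]

lemma isWalk_concat :
    IsWalk S u v (L ++ [a]) ↔
      IsWalk S u (TArc.tail a) L ∧ taW L ≤ TArc.ts a ∧ a ∈ S ∧ TArc.head a = v := by
  induction L generalizing u with
  | nil => grind [IsWalk, taW]
  | cons b L ih =>
    cases L with
    | nil => grind [IsWalk, taW]
    | cons c L =>
      have taW_tail : taW (b :: c :: L) = taW (c :: L) := by simp [taW]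
      rw [taW_tail, List.cons_append, IsWalk, ih]
      simp only [IsWalk, List.cons_append, List.head?_cons]
      tauto

lemma isDWalk_concat {E : Finset (α × α)} {e : α × α} {M : List (α × α)} :
    IsDWalk E u v (M ++ [e]) ↔ IsDWalk E u e.1 M ∧ e ∈ E ∧ e.2 = v := by
  induction M generalizing u with
  | nil => grind [IsDWalk]
  | cons f M ih => simp only [List.cons_append, IsDWalk, ih, and_assoc]

namespace IsWalk

lemma mem (hL : IsWalk S u v L) (ha : a ∈ L) : a ∈ S := by
  induction L generalizing u with
  | nil => simp at ha
  | cons b L ih =>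
    rcases List.mem_cons.1 ha with rfl | ha
    · exact hL.1
    · exact ih hL.2.2.2 ha

lemma of_forall_mem (hL : IsWalk S u v L) (hT : ∀ a ∈ L, a ∈ T) : IsWalk T u v L := by
  induction L generalizing u with
  | nil => exact hL
  | cons a L ih =>
    rw [List.forall_mem_cons] at hT
    exact ⟨hT.1, hL.2.1, hL.2.2.1, ih hL.2.2.2 hT.2⟩

lemma isDWalk (hL : IsWalk S u v L) : IsDWalk (S.image proj) u v (L.map proj) := by
  induction L generalizing u with
  | nil => exact hL
  | cons a L ih => exact ⟨Finset.mem_image_of_mem _ hL.1, hL.2.1, ih hL.2.2.2⟩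

lemma eq_of_map_proj_eq (hproj : (S : Set (TArc α)).InjOn proj) (hL : IsWalk S u v L)
    (hL' : IsWalk S u' v' L') (h : L.map proj = L'.map proj) : L = L' := by
  have : Nonempty (TArc α) := ⟨(u, v, 0, 0)⟩
  have map_inv_map {x y K} (hK : IsWalk S x y K) :
      (K.map proj).map (Function.invFunOn proj S) = K := by
    rw [List.map_map]
    conv_rhs => rw [← List.map_id K]
    exact List.map_congr_left fun a ha => hproj.leftInvOn_invFunOn (hK.mem ha)
  rw [← map_inv_map hL, h, map_inv_map hL']

lemma exists_isWalk_head_of_mem (hS : ∀ b ∈ S, TArc.ts b ≤ TArc.ta b) (hL : IsWalk S u v L)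
    (ha : a ∈ L) : ∃ L', IsWalk S u (TArc.head a) L' ∧ taW L' ≤ taW L := by
  induction L using List.reverseRecOn generalizing v with
  | nil => simp at ha
  | append_singleton P b ih =>
    obtain ⟨hP, hPb, hb, rfl⟩ := isWalk_concat.1 hL
    rcases List.mem_append.1 ha with haP | hab
    · obtain ⟨L', hL', hle⟩ := ih hP haP
      refine ⟨L', hL', ?_⟩
      rw [taW_concat]
      exact hle.trans (hPb.trans (hS b hb))
    · obtain rfl := List.mem_singleton.1 hab
      exact ⟨P ++ [a], hL, le_rfl⟩

lemma exists_isWalk_erase_taW_le (hL : IsWalk S u v L)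
    (hdetour : ∀ P, IsWalk (S.erase a) u (TArc.tail a) P → taW P ≤ TArc.ts a →
      ∃ Q, IsWalk (S.erase a) u (TArc.head a) Q ∧ taW Q ≤ TArc.ta a) :
    ∃ L', IsWalk (S.erase a) u v L' ∧ taW L' ≤ taW L := by
  induction L using List.reverseRecOn generalizing v with
  | nil => exact ⟨[], hL, le_rfl⟩
  | append_singleton P b ih =>
    obtain ⟨hP, hPb, hb, rfl⟩ := isWalk_concat.1 hL
    obtain ⟨P', hP', hle⟩ := ih hP
    rw [taW_concat]
    by_cases hba : b = a
    · subst hba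
      exact hdetour P' hP' (hle.trans hPb)
    · refine ⟨P' ++ [b], ?_, (taW_concat P' b).le⟩
      exact isWalk_concat.2 ⟨hP', hle.trans hPb, Finset.mem_erase.2 ⟨hba, hb⟩, rfl⟩

end IsWalk

end Walks

section OutBranching

variable {E : Finset (α × α)} {Vs : Finset α} {r v : α} {e : α × α} {M N : List (α × α)}

lemma IsDWalk.eq_of_injOn_snd (hinj : (E : Set (α × α)).InjOn Prod.snd)
    (hroot : ∀ e ∈ E, e.2 ≠ r) (hM : IsDWalk E r v M) (hN : IsDWalk E r v N) : M = N := by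
  induction M using List.reverseRecOn generalizing v N with
  | nil =>
    obtain rfl : r = v := hM
    cases N using List.reverseRecOn with
    | nil => rfl
    | append_singleton N f =>
      obtain ⟨-, hf, hfr⟩ := isDWalk_concat.1 hN
      exact absurd hfr (hroot f hf)
  | append_singleton P e ih =>
    obtain ⟨hP, he, rfl⟩ := isDWalk_concat.1 hM
    cases N using List.reverseRecOn with
    | nil => exact absurd (Eq.symm hN) (hroot e he)
    | append_singleton Q f =>
      obtain ⟨hQ, hf, hfe⟩ := isDWalk_concat.1 hN
      obtain rfl := hinj hf he hfe
      rw [ih hP hQ]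

lemma IsOutBranching.mem_of_isDWalk (hE : IsOutBranching Vs E r) (he : e ∈ E) (htail : e.1 ∈ Vs)
    (hhead : e.2 ∈ Vs) (hM : IsDWalk E r e.2 M) : e ∈ M := by
  obtain ⟨P, hP, -⟩ := hE _ htail
  have hPe : IsDWalk E r e.2 (P ++ [e]) := isDWalk_concat.2 ⟨hP, he, rfl⟩
  rw [(hE _ hhead).unique hM hPe]
  simp

end OutBranching

section TOB

variable {S : Finset (TArc α)} {B : TempGraph α} {r : α} {a : TArc α} {L : List (TArc α)}

lemma ReachAll.erase {Vs : Finset α} (h : ReachAll S Vs r)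
    (hdetour : ∀ P, IsWalk (S.erase a) r (TArc.tail a) P → taW P ≤ TArc.ts a →
      ∃ Q, IsWalk (S.erase a) r (TArc.head a) Q ∧ taW Q ≤ TArc.ta a) :
    ReachAll (S.erase a) Vs r := by
  intro v hv
  obtain ⟨L, hL⟩ := h v hv
  obtain ⟨L', hL', -⟩ := hL.exists_isWalk_erase_taW_le hdetour
  exact ⟨L', hL'⟩

namespace IsTOB

lemma not_reachAll_erase (hB : IsTOB B r) (ha : a ∈ B.A) : ¬ ReachAll (B.A.erase a) B.V r :=
  hB.2.2 _ (Finset.erase_ssubset ha)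

lemma exists_isWalk_erase_tail (hB : IsTOB B r) (ha : a ∈ B.A) :
    ∃ P, IsWalk (B.A.erase a) r (TArc.tail a) P ∧ taW P ≤ TArc.ts a := by
  by_contra! hunusable
  exact hB.not_reachAll_erase ha
    (hB.2.1.erase fun P hP hle => absurd hle (hunusable P hP).not_ge)

lemma not_isWalk_erase_head (hB : IsTOB B r) (ha : a ∈ B.A) (hle : taW L ≤ TArc.ta a) :
    ¬ IsWalk (B.A.erase a) r (TArc.head a) L := fun hL =>
  hB.not_reachAll_erase ha (hB.2.1.erase fun _ _ _ => ⟨L, hL, hle⟩)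

lemma head_ne_root (hB : IsTOB B r) (ha : a ∈ B.A) : TArc.head a ≠ r := fun har =>
  hB.not_isWalk_erase_head (L := []) ha (Nat.zero_le _) har.symm

lemma exists_isWalk_tail_avoiding_head (hB : IsTOB B r) (ha : a ∈ B.A) :
    ∃ P, IsWalk B.A r (TArc.tail a) P ∧ taW P ≤ TArc.ts a ∧
      ∀ c ∈ P, TArc.head c ≠ TArc.head a := by
  have ts_le_ta : ∀ c ∈ B.A, TArc.ts c ≤ TArc.ta c := fun c hc => (B.valid c hc).2.2.2.2.1
  obtain ⟨P, hP, hPa⟩ := hB.exists_isWalk_erase_tail ha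
  refine ⟨P, hP.of_forall_mem fun c hc => Finset.mem_of_mem_erase (hP.mem hc), hPa, ?_⟩
  intro c hcP hca
  obtain ⟨Q, hQ, hQP⟩ :=
    hP.exists_isWalk_head_of_mem (fun d hd => ts_le_ta d (Finset.mem_of_mem_erase hd)) hcP
  rw [hca] at hQ
  have hQa : taW Q ≤ TArc.ta a := hQP.trans (hPa.trans (ts_le_ta a ha))
  exact hB.not_isWalk_erase_head ha hQa hQ

lemma injOn_head (hB : IsTOB B r) : (B.A : Set (TArc α)).InjOn TArc.head := by
  intro a ha b hb hhead
  by_contra hab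
  wlog hle : TArc.ta a ≤ TArc.ta b generalizing a b
  · exact this hb ha hhead.symm (Ne.symm hab) (le_of_not_ge hle)
  obtain ⟨P, hP, hPa, havoid⟩ := hB.exists_isWalk_tail_avoiding_head ha
  have hP' : IsWalk (B.A.erase b) r (TArc.tail a) P := hP.of_forall_mem fun c hc =>
    Finset.mem_erase.2 ⟨fun hcb => havoid c hc (hcb ▸ hhead.symm), hP.mem hc⟩
  have hPa' : IsWalk (B.A.erase b) r (TArc.head b) (P ++ [a]) :=
    isWalk_concat.2 ⟨hP', hPa, Finset.mem_erase.2 ⟨hab, ha⟩, hhead⟩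
  exact hB.not_isWalk_erase_head hb ((taW_concat P a).trans_le hle) hPa'

lemma injOn_proj (hB : IsTOB B r) : (B.A : Set (TArc α)).InjOn proj :=
  fun _ ha _ hb hab => hB.injOn_head ha hb (congrArg Prod.snd hab)

lemma isOutBranching (hB : IsTOB B r) : IsOutBranching B.V (B.A.image proj) r := by
  have injOn_snd : (B.A.image proj : Set (α × α)).InjOn Prod.snd := by
    rw [Finset.coe_image]
    exact Set.InjOn.image_of_comp (g := Prod.snd) hB.injOn_head
  have snd_ne_root : ∀ e ∈ B.A.image proj, e.2 ≠ r :=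
    Finset.forall_mem_image.2 fun _ => hB.head_ne_root
  intro v hv
  obtain ⟨L, hL⟩ := hB.2.1 v hv
  exact ⟨L.map proj, hL.isDWalk, fun M hM => hM.eq_of_injOn_snd injOn_snd snd_ne_root hL.isDWalk⟩

end IsTOB

lemma IsOutBranching.isTOB (hout : IsOutBranching B.V (B.A.image proj) r)
    (hproj : (B.A : Set (TArc α)).InjOn proj) (hr : r ∈ B.V) (hreach : ReachAll B.A B.V r) :
    IsTOB B r := by
  refine ⟨hr, hreach, fun S hSA hS => ?_⟩
  obtain ⟨a, ha, haS⟩ := Finset.exists_of_ssubset hSA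
  obtain ⟨htail, hhead, -⟩ := B.valid a ha
  obtain ⟨L, hL⟩ := hS _ hhead
  have hLA : IsWalk B.A r (TArc.head a) L := hL.of_forall_mem fun b hb => hSA.subset (hL.mem hb)
  have proj_mem : proj a ∈ L.map proj :=
    hout.mem_of_isDWalk (Finset.mem_image_of_mem _ ha) htail hhead hLA.isDWalk
  obtain ⟨b, hbL, hba⟩ := List.mem_map.1 proj_mem
  obtain rfl := hproj (hLA.mem hbL) ha hba
  exact haS (hL.mem hbL)

end TOB

/-- Lemma `lem:tob`, 1 ⟺ 4: a temporal graph `B` with `r ∈ V` is a TOB with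
root `r` iff distinct temporal arcs have distinct (tail, head) pairs, the underlying digraph is
an out-branching with root `r`, and for every `v ∈ V \ {r}` the unique `(r,v)`-walk in the
underlying digraph comes from a temporal `(r,v)`-walk in `B` which is the unique temporal
`(r,v)`-walk in `B`. -/
theorem stmt_2 {α : Type u} (B : TempGraph α) (r : α) (hr : r ∈ B.V) :
    IsTOB B r ↔
      ((B.A : Set (TArc α)).InjOn proj ∧
        IsOutBranching B.V (B.A.image proj) r ∧
        ∀ v ∈ B.V, v ≠ r → ∀ M, IsDWalk (B.A.image proj) r v M →
          ∃ L, L.map proj = M ∧ IsWalk B.A r v L ∧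
            ∀ L', IsWalk B.A r v L' → L' = L) := by
  constructor
  · intro hB
    refine ⟨hB.injOn_proj, hB.isOutBranching, fun v hv _ M hM => ?_⟩
    obtain ⟨L, hL⟩ := hB.2.1 v hv
    have map_proj_eq {L'} (hL' : IsWalk B.A r v L') : L'.map proj = M :=
      (hB.isOutBranching v hv).unique hL'.isDWalk hM
    refine ⟨L, map_proj_eq hL, hL, fun L' hL' => ?_⟩
    exact hL'.eq_of_map_proj_eq hB.injOn_proj hL ((map_proj_eq hL').trans (map_proj_eq hL).symm)
  · rintro ⟨hproj, hout, hwalk⟩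
    refine hout.isTOB hproj hr fun v hv => ?_
    by_cases hvr : v = r
    · exact ⟨[], hvr.symm⟩
    · obtain ⟨M, hM, -⟩ := hout v hv
      obtain ⟨L, -, hL, -⟩ := hwalk v hv hvr M hM
      exact ⟨L, hL⟩
end

section
/- Let G=(V,A,τ) be a temporal graph with τ≤2 and let r∈V. Then G has a spanning ST-TOB with root r if and only if every vertex of G is temporally reachable from r. -/
open scoped Classical

universe u

variable {α : Type u}

/-!
Rank the walks from `r` by travelling time, then arrival time, then number of arcs, and keep for
each `v ≠ r` the last arc of one best walk to `v`. The kept arcs have distinct heads, none of them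
`r`, so they form a minimal reaching set as soon as they reach everything. They do, at optimal
travelling time, if the last arc `a` of a best walk `L ++ [a]` can always be boarded after an
arbitrary best walk `M` to its tail. If `M` travels as long as `L`, it arrives no later than `L`.
Otherwise `L` travels for at least one time unit, so it arrives at time `2` or later; when the
lifetime is at most `2`, the walk `M` cannot arrive after that.
-/

section Walks

variable {S T : Finset (TArc α)} {G : TempGraph α} {u v : α} {L : List (TArc α)} {a : TArc α}

theorem IsWalk.mono (hST : S ⊆ T) (h : IsWalk S u v L) : IsWalk T u v L := by
  induction L generalizing u with
  | nil => exact h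
  | cons a L ih => exact ⟨hST h.1, h.2.1, h.2.2.1, ih h.2.2.2⟩

theorem taW_append_singleton (L : List (TArc α)) (a : TArc α) : taW (L ++ [a]) = a.ta := by
  simp [taW]

theorem ttW_append_singleton (L : List (TArc α)) (a : TArc α) :
    ttW (L ++ [a]) = ttW L + a.el := by
  simp [ttW]

theorem isWalk_append_singleton :
    IsWalk S u v (L ++ [a]) ↔ IsWalk S u a.tail L ∧ taW L ≤ a.ts ∧ a ∈ S ∧ a.head = v := by
  induction L generalizing u with
  | nil => simp [IsWalk, taW, eq_comm, and_comm, and_assoc]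
  | cons b L ih =>
    simp only [List.cons_append, IsWalk, ih]
    cases L with
    | nil => simp [IsWalk, taW]; tauto
    | cons c L => simp [taW]; tauto

theorem IsWalk.exists_eq_append_singleton (h : IsWalk S u v L) (hvu : v ≠ u) :
    ∃ M a, L = M ++ [a] := by
  rcases L.eq_nil_or_concat with rfl | ⟨M, a, hL⟩
  · exact absurd h.symm hvu
  · exact ⟨M, a, hL.trans List.concat_eq_append⟩

theorem IsWalk.exists_head_eq (h : IsWalk S u v L) (hvu : v ≠ u) : ∃ a ∈ S, a.head = v := by
  obtain ⟨M, a, rfl⟩ := h.exists_eq_append_singleton hvu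
  exact ⟨a, (isWalk_append_singleton.1 h).2.2⟩

theorem IsWalk.taW_le_lifetime (h : IsWalk G.A u v L) : taW L ≤ G.τ := by
  induction L using List.reverseRecOn with
  | nil => exact Nat.zero_le _
  | append_singleton L a _ =>
    obtain ⟨-, -, ha, -⟩ := isWalk_append_singleton.1 h
    rw [taW_append_singleton]
    exact (G.valid a ha).2.2.2.2.2

theorem IsWalk.ttW_lt_taW (h : IsWalk G.A u v L) (hL : L ≠ []) : ttW L < taW L := by
  induction L using List.reverseRecOn generalizing v with
  | nil => exact absurd rfl hL
  | append_singleton L a ih =>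
    obtain ⟨hwalk, hboard, ha, -⟩ := isWalk_append_singleton.1 h
    obtain ⟨-, -, -, hstart, harrive, -⟩ := G.valid a ha
    have hprefix : ttW L < a.ts := by
      rcases eq_or_ne L [] with rfl | hne
      · exact hstart
      · exact (ih hwalk hne).trans_le hboard
    rw [taW_append_singleton, ttW_append_singleton, TArc.el]
    omega

end Walks

section CheapestWalks

variable {S : Finset (TArc α)} {u v r : α} {L M : List (TArc α)} {a : TArc α}

/-- The cost of a walk: travelling time, then arrival time, then number of arcs, compared
lexicographically. The number of arcs makes the cost drop even along arcs of elapsed time `0`. -/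
def walkCost (L : List (TArc α)) : ℕ ×ₗ ℕ ×ₗ ℕ :=
  toLex (ttW L, toLex (taW L, L.length))

theorem walkCost_le_iff :
    walkCost L ≤ walkCost M ↔ ttW L < ttW M ∨ ttW L = ttW M ∧
      (taW L < taW M ∨ taW L = taW M ∧ L.length ≤ M.length) := by
  simp [walkCost, Prod.Lex.toLex_le_toLex]

theorem walkCost_lt_iff :
    walkCost L < walkCost M ↔ ttW L < ttW M ∨ ttW L = ttW M ∧
      (taW L < taW M ∨ taW L = taW M ∧ L.length < M.length) := by
  simp [walkCost, Prod.Lex.toLex_lt_toLex]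

theorem walkCost_eq_iff :
    walkCost L = walkCost M ↔ ttW L = ttW M ∧ taW L = taW M ∧ L.length = M.length := by
  simp [walkCost]

/-- `L` is a temporal `(u,v)`-walk over the arcs `S` of minimum cost. -/
def IsCheapest (S : Finset (TArc α)) (u v : α) (L : List (TArc α)) : Prop :=
  IsWalk S u v L ∧ ∀ M, IsWalk S u v M → walkCost L ≤ walkCost M

theorem exists_isCheapest (h : ∃ L, IsWalk S u v L) : ∃ L, IsCheapest S u v L := by
  obtain ⟨L, hL, hmin⟩ := (InvImage.wf walkCost wellFounded_lt).has_min {L | IsWalk S u v L} h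
  exact ⟨L, hL, fun M hM => not_lt.1 (hmin M hM)⟩

theorem IsCheapest.ttW_le (h : IsCheapest S u v L) (hM : IsWalk S u v M) : ttW L ≤ ttW M := by
  have := walkCost_le_iff.1 (h.2 M hM)
  omega

theorem IsCheapest.walkCost_eq (hL : IsCheapest S u v L) (hM : IsCheapest S u v M) :
    walkCost L = walkCost M :=
  le_antisymm (hL.2 M hM.1) (hM.2 L hL.1)

theorem IsCheapest.eq_nil (h : IsCheapest S u u L) : L = [] := by
  have := walkCost_le_iff.1 (h.2 [] rfl)
  simp only [ttW, taW, List.map_nil, List.sum_nil, List.getLastD_nil, List.length_nil] at this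
  exact List.length_eq_zero_iff.1 (by omega)

theorem IsCheapest.ttW_prefix_eq (hL : IsCheapest S r v (L ++ [a]))
    (hM : IsCheapest S r a.tail M) (hboard : taW M ≤ a.ts) : ttW M = ttW L := by
  obtain ⟨hprefix, -, ha, hv⟩ := isWalk_append_singleton.1 hL.1
  have hspliced : IsWalk S r v (M ++ [a]) := isWalk_append_singleton.2 ⟨hM.1, hboard, ha, hv⟩
  have hle := hL.ttW_le hspliced
  rw [ttW_append_singleton, ttW_append_singleton, Nat.add_le_add_iff_right] at hle
  exact (hM.ttW_le hprefix).antisymm hle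

theorem IsCheapest.walkCost_lt_of_append_singleton (hL : IsCheapest S r v (L ++ [a]))
    (hM : IsCheapest S r a.tail M) (hboard : taW M ≤ a.ts) (ha : a.ts ≤ a.ta) :
    walkCost M < walkCost (L ++ [a]) := by
  obtain ⟨hprefix, hLboard, -, -⟩ := isWalk_append_singleton.1 hL.1
  have htt := hL.ttW_prefix_eq hM hboard
  have hML := walkCost_le_iff.1 (hM.2 L hprefix)
  rw [walkCost_lt_iff, ttW_append_singleton, taW_append_singleton, List.length_append,
    List.length_singleton, TArc.el]
  omega

/-- Cheapest walks from `r` can be spliced: the last arc of a cheapest walk may be boarded after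
any cheapest walk to its tail. -/
def CheapestSpliceable (S : Finset (TArc α)) (r : α) : Prop :=
  ∀ ⦃v L M a⦄, IsCheapest S r v (L ++ [a]) → IsCheapest S r (TArc.tail a) M → taW M ≤ TArc.ts a

theorem cheapestSpliceable_of_lifetime_le_two {G : TempGraph α} (hτ : G.τ ≤ 2) (r : α) :
    CheapestSpliceable G.A r := by
  intro v L M a hL hM
  obtain ⟨hprefix, hboard, -, -⟩ := isWalk_append_singleton.1 hL.1
  rcases (hM.ttW_le hprefix).lt_or_eq with hlt | heq
  · have hne : L ≠ [] := by
      rintro rfl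
      exact Nat.not_lt_zero _ hlt
    have hlate := hprefix.ttW_lt_taW hne
    have hMτ := hM.1.taW_le_lifetime
    omega
  · have hML := walkCost_le_iff.1 (hM.2 L hprefix)
    omega

end CheapestWalks

section LastArcs

variable {S T : Finset (TArc α)} {r v : α} {L : List (TArc α)} {a : TArc α}

/-- `a` is the last arc of some cheapest `(r,v)`-walk over `S`. -/
def IsCheapestLastArc (S : Finset (TArc α)) (r v : α) (a : TArc α) : Prop :=
  ∃ L, IsCheapest S r v (L ++ [a])

theorem IsCheapestLastArc.mem_and_head_eq (h : IsCheapestLastArc S r v a) :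
    a ∈ S ∧ a.head = v := by
  obtain ⟨L, hL⟩ := h
  exact (isWalk_append_singleton.1 hL.1).2.2

theorem exists_isCheapestLastArc (h : ∃ L, IsWalk S r v L) (hvr : v ≠ r) :
    ∃ a, IsCheapestLastArc S r v a := by
  obtain ⟨C, hC⟩ := exists_isCheapest h
  obtain ⟨L, a, rfl⟩ := hC.1.exists_eq_append_singleton hvr
  exact ⟨a, L, hC⟩

/-- `T` consists of one last arc of a cheapest walk from `r` over `S` for each vertex `v ≠ r`
reachable from `r`: the parent arcs of a shortest-path tree. -/
structure IsCheapestParentArcs (S T : Finset (TArc α)) (r : α) : Prop where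
  subset : T ⊆ S
  head_ne_root : ∀ a ∈ T, TArc.head a ≠ r
  injOn_head : Set.InjOn TArc.head (T : Set (TArc α))
  exists_lastArc : ∀ v ≠ r, (∃ L, IsWalk S r v L) → ∃ a ∈ T, IsCheapestLastArc S r v a

theorem exists_isCheapestParentArcs (S : Finset (TArc α)) (r : α) :
    ∃ T, IsCheapestParentArcs S T r := by
  have : Nonempty α := ⟨r⟩
  choose! p hp using fun v (h : (∃ L, IsWalk S r v L) ∧ v ≠ r) =>
    exists_isCheapestLastArc h.1 h.2
  let W := (S.image TArc.head).filter fun v => (∃ L, IsWalk S r v L) ∧ v ≠ r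
  have hW : ∀ {v}, v ∈ W → p v ∈ S ∧ (p v).head = v := fun hv =>
    (hp _ (Finset.mem_filter.1 hv).2).mem_and_head_eq
  refine ⟨W.image p, ?_, ?_, ?_, ?_⟩
  · exact Finset.image_subset_iff.2 fun v hv => (hW hv).1
  · intro a ha
    obtain ⟨v, hv, rfl⟩ := Finset.mem_image.1 ha
    rw [(hW hv).2]
    exact (Finset.mem_filter.1 hv).2.2
  · rw [Finset.coe_image]
    have hleft : Set.LeftInvOn TArc.head p W := fun v hv => (hW hv).2
    exact hleft.rightInvOn_image.injOn
  · intro v hvr hreach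
    have hv := hp v ⟨hreach, hvr⟩
    have hvS := Finset.mem_image.2 ⟨p v, hv.mem_and_head_eq⟩
    exact ⟨p v, Finset.mem_image_of_mem p (Finset.mem_filter.2 ⟨hvS, hreach, hvr⟩), hv⟩

theorem IsCheapestParentArcs.exists_isWalk (hT : IsCheapestParentArcs S T r)
    (htime : ∀ a ∈ S, TArc.ts a ≤ TArc.ta a) (hsplice : CheapestSpliceable S r)
    (hL : IsCheapest S r v L) :
    ∃ P, IsWalk T r v P ∧ ttW P = ttW L ∧ taW P = taW L := by
  induction hcost : walkCost L using WellFoundedLT.induction generalizing v L with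
  | _ c ih =>
    rcases eq_or_ne v r with rfl | hvr
    · rw [hL.eq_nil]
      exact ⟨[], rfl, rfl, rfl⟩
    · obtain ⟨a, haT, N, hN⟩ := hT.exists_lastArc v hvr ⟨L, hL.1⟩
      have hNL := hN.walkCost_eq hL
      obtain ⟨M, hM⟩ := exists_isCheapest ⟨N, (isWalk_append_singleton.1 hN.1).1⟩
      have hboard := hsplice hN hM
      have hlt : walkCost M < c :=
        (hN.walkCost_lt_of_append_singleton hM hboard (htime a (hT.subset haT))).trans_eq
          (hNL.trans hcost)
      obtain ⟨P, hP, hPtt, hPta⟩ := ih _ hlt hM rfl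
      obtain ⟨hNtt, hNta, -⟩ := walkCost_eq_iff.1 hNL
      refine ⟨P ++ [a], isWalk_append_singleton.2
        ⟨hP, hPta.trans_le hboard, haT, (isWalk_append_singleton.1 hN.1).2.2.2⟩, ?_, ?_⟩
      · rw [← hNtt, ttW_append_singleton, ttW_append_singleton, hPtt, hN.ttW_prefix_eq hM hboard]
      · rw [← hNta, taW_append_singleton, taW_append_singleton]

end LastArcs

section Branchings

variable {d : DistKind} {G B : TempGraph α} {r u v : α} {L : List (TArc α)}

theorem IsSpanningDTOB.reachAll (hB : IsSpanningDTOB d G B r) : ReachAll G.A G.V r := by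
  obtain ⟨⟨⟨-, hreach, -⟩, ⟨-, hA, -⟩, -⟩, hV⟩ := hB
  intro v hv
  exact (hreach v (hV ▸ hv)).imp fun _ hL => hL.mono hA

theorem isTOB_of_injOn_head (hr : r ∈ B.V) (hreach : ReachAll B.A B.V r)
    (hroot : ∀ a ∈ B.A, a.head ≠ r) (hinj : Set.InjOn TArc.head (B.A : Set (TArc α))) :
    IsTOB B r := by
  refine ⟨hr, hreach, fun S hS hSreach => ?_⟩
  obtain ⟨a, ha, haS⟩ := Finset.exists_of_ssubset hS
  obtain ⟨L, hL⟩ := hSreach _ (B.valid a ha).2.1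
  obtain ⟨b, hbS, hba⟩ := hL.exists_head_eq (hroot a ha)
  exact haS (hinj (hS.1 hbS) ha hba ▸ hbS)

theorem distVal_eq_of_realizes (hd : d ≠ DistKind.LD) (hA : B.A ⊆ G.A)
    (hB : IsWalk B.A u v L) (hG : Realizes d G.A u v L) : distVal d B u v = distVal d G u v := by
  simp only [distVal, if_neg hd]
  apply le_antisymm
  · refine le_sInf ?_
    rintro _ ⟨M, hM, rfl⟩
    have hLM := hG.2 M hM
    rw [if_neg hd] at hLM
    exact sInf_le_of_le ⟨L, hB, rfl⟩ (Nat.cast_le.2 hLM)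
  · refine sInf_le_sInf ?_
    rintro _ ⟨M, hM, rfl⟩
    exact ⟨M, hM.mono hA, rfl⟩

/-- The spanning temporal subgraph of `G` with arc set `T`. -/
def TempGraph.restrictArcs (G : TempGraph α) (T : Finset (TArc α)) (hT : T ⊆ G.A) :
    TempGraph α where
  V := G.V
  A := T
  τ := G.τ
  nonempty := G.nonempty
  valid a ha := G.valid a (hT ha)

theorem exists_isSpanningDTOB_ST (hsplice : CheapestSpliceable G.A r) (hr : r ∈ G.V)
    (hreach : ReachAll G.A G.V r) : ∃ B, IsSpanningDTOB DistKind.ST G B r := by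
  obtain ⟨T, hT⟩ := exists_isCheapestParentArcs G.A r
  have hopt : ∀ v ∈ G.V, ∃ P, IsWalk T r v P ∧ Realizes DistKind.ST G.A r v P := by
    intro v hv
    obtain ⟨L, hL⟩ := exists_isCheapest (hreach v hv)
    obtain ⟨P, hP, htt, -⟩ := hT.exists_isWalk (fun a ha => (G.valid a ha).2.2.2.2.1) hsplice hL
    exact ⟨P, hP, hP.mono hT.subset, fun M hM => htt.trans_le (hL.ttW_le hM)⟩
  refine ⟨G.restrictArcs T hT.subset, ⟨?_, ⟨subset_rfl, hT.subset, le_rfl⟩, ?_⟩, rfl⟩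
  · exact isTOB_of_injOn_head hr (fun v hv => (hopt v hv).imp fun _ hP => hP.1)
      hT.head_ne_root hT.injOn_head
  · intro v hv
    obtain ⟨P, hP, hreal⟩ := hopt v hv
    exact distVal_eq_of_realizes (by decide) hT.subset hP hreal

end Branchings

/-- Lemma `claim:STtau`: if `τ ≤ 2`, then `G` has a spanning ST-TOB with
root `r` iff every vertex of `G` is temporally reachable from `r`. -/
theorem stmt_10 {α : Type u} (G : TempGraph α) (hτ : G.τ ≤ 2) (r : α) (hr : r ∈ G.V) :
    (∃ B : TempGraph α, IsSpanningDTOB DistKind.ST G B r) ↔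
      ∀ v ∈ G.V, ∃ L, IsWalk G.A r v L := by
  refine ⟨?_, exists_isSpanningDTOB_ST (cheapestSpliceable_of_lifetime_le_two hτ r) hr⟩
  rintro ⟨B, hB⟩
  exact hB.reachAll
end
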